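/- arXiv:math/0403467 — 3 statements merged into one kernel-verified Lean document; each statement's English description precedes it below -/
import Mathlib

section
/- Let A and B be real n×n stable matrices and suppose that A − B has rank one. Then there exists a common quadratic Lyapunov function for A and B (i.e. a real symmetric positive definite matrix P with P·A + Aᵀ·P negative definite and P·B + Bᵀ·P negative definite) if and only if the matrix A·B has no real negative eigenvalue, i.e. there is no real λ < 0 and nonzero x ∈ ℝⁿ with A·B·x = λ·x. -/
open Matrix

/-- A real square matrix is *stable* if every eigenvalue (over ℂ) has negative real part. -/
def IsStable {n : ℕ} (A : Matrix (Fin n) (Fin n) ℝ) : Prop :=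
  ∀ μ : ℂ, μ ∈ spectrum ℂ (A.map (algebraMap ℝ ℂ)) → μ.re < 0

/-- `(A,B)` has a common quadratic Lyapunov function: a real symmetric positive definite `P`
with `P·A + Aᵀ·P` and `P·B + Bᵀ·P` both negative definite. -/
def HasCQLF {n : ℕ} (A B : Matrix (Fin n) (Fin n) ℝ) : Prop :=
  ∃ P : Matrix (Fin n) (Fin n) ℝ,
    P.PosDef ∧ (-(P * A + Aᵀ * P)).PosDef ∧ (-(P * B + Bᵀ * P)).PosDef

section PositiveSemidefinite

open scoped ComplexOrder

lemma Matrix.PosSemidef.mul_eq_zero_of_le {n m : Type*} [Fintype n] {Y Z : Matrix n n ℂ}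
    (hY : Y.PosSemidef) (hYZ : (Z - Y).PosSemidef) {N : Matrix n m ℂ} (hN : Z * N = 0) :
    Y * N = 0 := by
  ext i j
  have hZv : Z *ᵥ N.col j = 0 := by
    ext k; exact congr_fun (congr_fun hN k) j
  have h1 := hY.dotProduct_mulVec_nonneg (N.col j)
  have h2 := hYZ.dotProduct_mulVec_nonneg (N.col j)
  rw [sub_mulVec, hZv, zero_sub, dotProduct_neg, Left.nonneg_neg_iff] at h2
  exact congr_fun ((hY.dotProduct_mulVec_zero_iff _).1 (le_antisymm h2 h1)) i

/-- A positive semidefinite matrix has a Hermitian square root `R` with a commuting Hermitian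
generalized inverse `T`. -/
lemma Matrix.PosSemidef.exists_sqrt_pseudoinverse {n : Type*} [Fintype n] [DecidableEq n]
    {Z : Matrix n n ℂ} (hZ : Z.PosSemidef) :
    ∃ R T : Matrix n n ℂ, Rᴴ = R ∧ Tᴴ = T ∧ R * R = Z ∧ R * T = T * R ∧ R * T * R = R := by
  have hH := hZ.isHermitian
  set U : Matrix n n ℂ := (hH.eigenvectorUnitary).1
  have hUU : Uᴴ * U = 1 := Unitary.coe_star_mul_self hH.eigenvectorUnitary
  set d : n → ℂ := fun i => (Real.sqrt (hH.eigenvalues i) : ℂ)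
  set e : n → ℂ := fun i => ((Real.sqrt (hH.eigenvalues i))⁻¹ : ℂ)
  have key (x y : n → ℂ) : U * diagonal x * Uᴴ * (U * diagonal y * Uᴴ)
      = U * diagonal (fun i => x i * y i) * Uᴴ := by
    rw [← diagonal_mul_diagonal]
    calc _ = U * diagonal x * (Uᴴ * U) * diagonal y * Uᴴ := by simp only [Matrix.mul_assoc]
      _ = _ := by rw [hUU]; simp only [Matrix.mul_assoc, Matrix.one_mul]
  refine ⟨U * diagonal d * Uᴴ, U * diagonal e * Uᴴ, ?_, ?_, ?_, ?_, ?_⟩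
  · simp only [conjTranspose_mul, diagonal_conjTranspose, conjTranspose_conjTranspose,
      Matrix.mul_assoc]
    congr 3; ext i; simp [d]
  · simp only [conjTranspose_mul, diagonal_conjTranspose, conjTranspose_conjTranspose,
      Matrix.mul_assoc]
    congr 3; ext i; simp [e]
  · rw [key]
    conv_rhs => rw [hH.spectral_theorem, Unitary.conjStarAlgAut_apply]
    congr 3; ext i
    simp only [d, Function.comp_apply]
    rw [← Complex.ofReal_mul, Real.mul_self_sqrt (hZ.eigenvalues_nonneg i)]; rfl
  · rw [key, key]; congr 3; ext i; exact mul_comm _ _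
  · rw [key, key]; congr 3; ext i
    exact mul_inv_mul_cancel (d i)

/-- The dual half of the Kalman–Yakubovich–Popov lemma: under the strict frequency condition, the
only positive semidefinite `Z ≥ Y` with `A Z + Z Aᴴ = b (Y c)ᴴ + (Y c) bᴴ` is `0`. -/
lemma eq_zero_of_frequency_condition {n : Type*} [Fintype n] [DecidableEq n]
    {A Y Z : Matrix n n ℂ} {b c : Matrix n (Fin 1) ℂ}
    (hY : Y.PosSemidef) (hZ : Z.PosSemidef) (hYZ : (Z - Y).PosSemidef)
    (heq : A * Z + Z * Aᴴ = b * (Y * c)ᴴ + Y * c * bᴴ)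
    (hA : ∀ (ω : ℝ) (x : n → ℂ), A *ᵥ x = (ω * Complex.I) • x → x = 0)
    (hfreq : ∀ (ω : ℝ) (x : n → ℂ) (u : ℂ), u ≠ 0 →
      A *ᵥ x + u • b.col 0 = (ω * Complex.I) • x →
        0 < ((star (c.col 0) ⬝ᵥ x + u) * star u).re) : Z = 0 := by
  obtain ⟨R, T, hR, hT, hRR, hRT, hRTR⟩ := hZ.exists_sqrt_pseudoinverse
  have hYH : Yᴴ = Y := hY.isHermitian
  have hZH : Zᴴ = Z := hZ.isHermitian
  have hZN : Z * (1 - T * R) = 0 := by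
    rw [← hRR, Matrix.mul_assoc, Matrix.mul_sub, Matrix.mul_one, ← Matrix.mul_assoc R T R, hRTR,
      sub_self, Matrix.mul_zero]
  have hYN : Y * (1 - T * R) = 0 := hY.mul_eq_zero_of_le hYZ hZN
  have hYR : Y * T * R = Y := by
    rw [Matrix.mul_sub, Matrix.mul_one, sub_eq_zero, ← Matrix.mul_assoc] at hYN
    exact hYN.symm
  have hRY : R * T * Y = Y := by
    have := congr_arg conjTranspose hYR
    simpa only [conjTranspose_mul, hYH, hT, hR, Matrix.mul_assoc] using this
  set q := Y * c with hq
  set w := T * T * q with hw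
  set r := R * w with hr
  have hRr : R * r = q := by
    calc R * r = R * (R * T) * T * q := by simp only [hr, hw, Matrix.mul_assoc]
      _ = (R * T * R) * T * q := by rw [Matrix.mul_assoc R T R, ← hRT]
      _ = R * T * Y * c := by rw [hRTR]; simp only [hq, Matrix.mul_assoc]
      _ = q := by rw [hRY]
  have hZw : Z * w = q := by rw [← hRR, Matrix.mul_assoc, ← hr, hRr]
  set K := A * Z - b * qᴴ with hK
  have hKH : Kᴴ = -K := by
    have h : Kᴴ = Z * Aᴴ - q * bᴴ := by
      simp only [hK, conjTranspose_sub, conjTranspose_mul, conjTranspose_conjTranspose, hZH]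
    rw [h, eq_neg_iff_add_eq_zero, hK]
    rw [show Z * Aᴴ - q * bᴴ + (A * Z - b * qᴴ) = (A * Z + Z * Aᴴ) - (b * qᴴ + q * bᴴ) by abel,
      heq, sub_self]
  have hKN : K * (1 - T * R) = 0 := by
    rw [hK, Matrix.sub_mul, Matrix.mul_assoc, hZN, hq, conjTranspose_mul, hYH,
      Matrix.mul_assoc, Matrix.mul_assoc, hYN]
    simp
  have hKR : K * T * R = K := by
    rw [Matrix.mul_sub, Matrix.mul_one, sub_eq_zero, ← Matrix.mul_assoc] at hKN
    exact hKN.symm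
  have hRK : R * T * K = K := by
    have := congr_arg conjTranspose hKR
    simp only [conjTranspose_mul, hKH, hT, hR, Matrix.mul_neg, neg_inj] at this
    rwa [Matrix.mul_assoc]
  set S := T * K * T with hS
  have hAR : A * R = b * rᴴ + R * S := by
    have h1 : R * S = K * T := by
      rw [hS, ← Matrix.mul_assoc, ← Matrix.mul_assoc, hRK]
    have h2 : Z * T = R := by rw [← hRR, Matrix.mul_assoc, hRT, ← Matrix.mul_assoc, hRTR]
    have h3 : qᴴ * T = rᴴ := by
      have : T * q = r := by
        rw [← hRr, hr, ← hRTR]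
        have : T * (R * (R * w)) = R * T * R * w := by
          rw [hRT]; simp only [Matrix.mul_assoc]
        rw [hRTR, this, hRTR]
      rw [← this, conjTranspose_mul T q, hT]
    rw [h1, hK, Matrix.sub_mul, Matrix.mul_assoc, h2, Matrix.mul_assoc, h3]; abel
  have hSH : (Complex.I • S).IsHermitian := by
    rw [IsHermitian, conjTranspose_smul, hS]
    simp [conjTranspose_mul, hT, hKH, Matrix.mul_assoc]
  set V : Matrix n n ℂ := (hSH.eigenvectorUnitary).1 with hV
  have hVV : V * Vᴴ = 1 := Unitary.coe_mul_star_self hSH.eigenvectorUnitary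
  set Ω := hSH.eigenvalues with hΩ
  have hSv (k : n) : S *ᵥ V.col k = ((-Ω k : ℝ) * Complex.I) • V.col k := by
    have := hSH.mulVec_eigenvectorBasis k
    rw [← hSH.eigenvectorUnitary_col_eq, ← hV, smul_mulVec, ← hΩ] at this
    have h2 := congr_arg (fun x => (-Complex.I) • x) this
    simp only [smul_smul] at h2
    rw [show -Complex.I * Complex.I = 1 by simp, one_smul] at h2
    rw [h2]
    ext i
    simp; ring
  have hcol (k : n) : A *ᵥ (R *ᵥ V.col k) + (-(rᴴ * V) 0 k) • b.col 0
      = ((-Ω k : ℝ) * Complex.I) • (R *ᵥ V.col k) := by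
    rw [← mulVec_smul, ← hSv, mulVec_mulVec, mulVec_mulVec, hAR, add_mulVec]
    have : (b * rᴴ) *ᵥ V.col k = (rᴴ * V) 0 k • b.col 0 := by
      rw [← mulVec_mulVec]
      ext i
      simp [mulVec, dotProduct, Matrix.mul_apply, mul_comm]
    rw [this, neg_smul]; abel
  have hαγ : ((rᴴ * r) 0 0).re ≤ ((cᴴ * q) 0 0).re := by
    have h1 := (Complex.le_def.1 ((hY.conjTranspose_mul_mul_same (w - c)).diag_nonneg (i := 0))).1
    have h2 := (Complex.le_def.1 ((hYZ.conjTranspose_mul_mul_same w).diag_nonneg (i := 0))).1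
    have h3 : wᴴ * Z * w = rᴴ * r := by
      rw [← hRR, hr, conjTranspose_mul R w, hR]; simp only [Matrix.mul_assoc]
    have h4 : wᴴ * Y * c = rᴴ * r := by rw [← h3, Matrix.mul_assoc, Matrix.mul_assoc, hZw]
    have h5 : cᴴ * Y * w = rᴴ * r := by
      have := congr_arg conjTranspose h4
      simpa only [conjTranspose_mul, conjTranspose_conjTranspose, hYH, Matrix.mul_assoc] using this
    have e1 : (w - c)ᴴ * Y * (w - c) = wᴴ * Y * w - rᴴ * r - rᴴ * r + cᴴ * q := by
      simp only [conjTranspose_sub, Matrix.sub_mul, Matrix.mul_sub, h4, h5, hq]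
      rw [Matrix.mul_assoc cᴴ]; abel
    rw [e1] at h1
    rw [Matrix.mul_sub, Matrix.sub_mul, h3] at h2
    simp at h1 h2
    linarith
  have hsum : ∑ k, ((star (c.col 0) ⬝ᵥ (R *ᵥ V.col k) + -(rᴴ * V) 0 k)
      * star (-(rᴴ * V) 0 k)).re ≤ 0 := by
    have h1 : (cᴴ * R * V - rᴴ * V) * (-(rᴴ * V)ᴴ) = rᴴ * r - cᴴ * q := by
      have : (cᴴ * R * V - rᴴ * V) * (-(rᴴ * V)ᴴ) =
          rᴴ * (V * Vᴴ) * r - cᴴ * R * (V * Vᴴ) * r := by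
        simp only [conjTranspose_mul, conjTranspose_conjTranspose, Matrix.sub_mul, Matrix.mul_neg,
          Matrix.mul_assoc]
        abel
      rw [this, hVV, Matrix.mul_one, Matrix.mul_one, Matrix.mul_assoc, hRr]
    have h2 := congr_fun (congr_fun h1 0) 0
    rw [Matrix.mul_apply] at h2
    rw [← Complex.re_sum]
    have h3 : ∀ k, star (c.col 0) ⬝ᵥ (R *ᵥ V.col k) = (cᴴ * R * V) 0 k := by
      intro k
      rw [Matrix.mul_assoc]; rfl
    simp only [h3]
    have h4 := congr_arg Complex.re h2
    simp only [Matrix.sub_apply, Complex.sub_re] at h4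
    have : ((rᴴ * r) 0 0).re - ((cᴴ * q) 0 0).re ≤ 0 := by linarith
    rw [← h4] at this
    have h5 (k : n) : star (-(rᴴ * V) 0 k) = (-(rᴴ * V)ᴴ) k 0 := by rw [star_neg]; rfl
    simp only [h5, ← sub_eq_add_neg]
    exact this
  have hterm (k : n) : -(rᴴ * V) 0 k ≠ 0 → 0 < ((star (c.col 0) ⬝ᵥ (R *ᵥ V.col k) + -(rᴴ * V) 0 k)
      * star (-(rᴴ * V) 0 k)).re := fun h => hfreq _ _ _ h (hcol k)
  have hnn (k : n) : 0 ≤ ((star (c.col 0) ⬝ᵥ (R *ᵥ V.col k) + -(rᴴ * V) 0 k)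
      * star (-(rᴴ * V) 0 k)).re := by
    by_cases h : -(rᴴ * V) 0 k = 0
    · simp [h]
    · exact (hterm k h).le
  have hzero := (Finset.sum_eq_zero_iff_of_nonneg (fun k _ => hnn k)).1
    (le_antisymm hsum (Finset.sum_nonneg fun k _ => hnn k))
  have hu (k : n) : -(rᴴ * V) 0 k = 0 := by
    by_contra h
    exact (hterm k h).ne' (hzero k (Finset.mem_univ k))
  have hRV : R * V = 0 := by
    ext i k
    have h := hcol k
    rw [hu, zero_smul, add_zero] at h
    exact congr_fun (hA _ _ h) i
  have hR0 : R = 0 := by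
    rw [← Matrix.mul_one R, ← hVV, ← Matrix.mul_assoc, hRV, Matrix.zero_mul]
  rw [← hRR, hR0, Matrix.zero_mul]

end PositiveSemidefinite

/-- If `t • 1 + M` is nonsingular for all `t ≥ 0`, then its determinant is positive there. -/
lemma det_smul_one_add_pos {n : Type*} [Fintype n] [DecidableEq n] {M : Matrix n n ℝ}
    (h : ∀ t : ℝ, 0 ≤ t → (t • 1 + M).det ≠ 0) {t : ℝ} (ht : 0 ≤ t) : 0 < (t • 1 + M).det := by
  set f : ℝ → ℝ := fun s => ((1 - s) • (1 : Matrix n n ℝ) + s • M).det with hf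
  have hfc : Continuous f := by
    apply Continuous.matrix_det
    fun_prop
  have hscale (s : ℝ) (hs : 0 < s) :
      f s = s ^ Fintype.card n * (((1 - s) / s) • (1 : Matrix n n ℝ) + M).det := by
    rw [← det_smul, smul_add, smul_smul, mul_div_cancel₀ _ hs.ne']
  have hne (s : ℝ) (hs0 : 0 ≤ s) (hs1 : s ≤ 1) : f s ≠ 0 := by
    rcases hs0.eq_or_lt with rfl | hs
    · simp [hf]
    · rw [hscale s hs]
      exact mul_ne_zero (pow_ne_zero _ hs.ne') (h _ (div_nonneg (by linarith) hs.le))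
  have hs : 0 < (1 + t)⁻¹ := by positivity
  have hs1 : (1 + t)⁻¹ ≤ 1 := inv_le_one_of_one_le₀ (by linarith)
  have hpos : 0 < f (1 + t)⁻¹ := by
    by_contra hle
    obtain ⟨s, hs', hs0⟩ := intermediate_value_Icc' hs.le hfc.continuousOn
      (show (0 : ℝ) ∈ Set.Icc (f (1 + t)⁻¹) (f 0) from ⟨not_lt.1 hle, by simp [hf]⟩)
    exact hne s hs'.1 (hs'.2.trans hs1) hs0
  rw [hscale _ hs, show (1 - (1 + t)⁻¹) / (1 + t)⁻¹ = t by field_simp; ring] at hpos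
  exact pos_of_mul_pos_right hpos (by positivity)

namespace IsStable

variable {n : ℕ} {A : Matrix (Fin n) (Fin n) ℝ}

lemma isUnit_smul_one_sub (hA : IsStable A) {μ : ℂ} (hμ : 0 ≤ μ.re) :
    IsUnit (μ • 1 - A.map (algebraMap ℝ ℂ)) := by
  by_contra h
  refine (hA μ ?_).not_ge hμ
  rwa [spectrum.mem_iff, Algebra.algebraMap_eq_smul_one]

lemma eq_zero_of_mulVec_eq_smul (hA : IsStable A) {μ : ℂ} (hμ : 0 ≤ μ.re) {x : Fin n → ℂ}
    (hx : A.map (algebraMap ℝ ℂ) *ᵥ x = μ • x) : x = 0 := by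
  refine (mulVec_injective_iff_isUnit.2 (hA.isUnit_smul_one_sub hμ)) ?_
  rw [sub_mulVec, smul_mulVec, one_mulVec, hx, sub_self, mulVec_zero]

lemma isUnit (hA : IsStable A) : IsUnit A := by
  have h := hA.isUnit_smul_one_sub (μ := 0) le_rfl
  rw [zero_smul, zero_sub, IsUnit.neg_iff, isUnit_iff_isUnit_det, isUnit_iff_ne_zero] at h
  rw [isUnit_iff_isUnit_det, isUnit_iff_ne_zero]
  intro h0
  apply h
  have := (algebraMap ℝ ℂ).map_det A
  rw [h0, map_zero] at this
  exact this.symm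

lemma det_smul_one_add_sq_ne_zero (hA : IsStable A) {t : ℝ} (ht : 0 ≤ t) :
    (t • 1 + A * A).det ≠ 0 := by
  intro h0
  obtain ⟨x, hx0, hx⟩ := exists_mulVec_eq_zero_iff.2 h0
  set z : Fin n → ℂ := fun i => (x i : ℂ) with hz
  set AC := A.map (algebraMap ℝ ℂ) with hAC
  have hmap (y : Fin n → ℝ) : AC *ᵥ (fun i => (y i : ℂ)) = fun i => ((A *ᵥ y) i : ℂ) := by
    ext i; simp [AC, mulVec, dotProduct]
  have h1 : AC *ᵥ (AC *ᵥ z) = (-t : ℂ) • z := by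
    rw [hz, hmap, hmap]
    ext i
    have := congr_fun hx i
    rw [add_mulVec, smul_mulVec, one_mulVec, ← mulVec_mulVec] at this
    simp only [Pi.add_apply, Pi.smul_apply, smul_eq_mul, Pi.zero_apply] at this ⊢
    rw [show (A *ᵥ A *ᵥ x) i = -t * x i by linarith]; push_cast; rfl
  have hsq : (Real.sqrt t : ℂ) * Real.sqrt t = t := by
    rw [← Complex.ofReal_mul, Real.mul_self_sqrt ht]
  have h2 : AC *ᵥ z - (Real.sqrt t * Complex.I) • z = 0 := by
    apply hA.eq_zero_of_mulVec_eq_smul (μ := -(Real.sqrt t * Complex.I)) (by simp)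
    rw [mulVec_sub, ← hAC, h1, mulVec_smul, smul_sub, smul_smul, neg_smul, neg_smul]
    rw [show -(Real.sqrt t * Complex.I) * (Real.sqrt t * Complex.I) = (t : ℂ) by
      linear_combination -Real.sqrt t * Real.sqrt t * Complex.I_mul_I + hsq]
    abel
  have h3 : z = 0 := hA.eq_zero_of_mulVec_eq_smul (by simp) (sub_eq_zero.1 h2)
  apply hx0
  ext i
  simpa [hz] using congr_fun h3 i

end IsStable

lemma det_smul_one_add_mul_ne_zero {n : ℕ} {A B : Matrix (Fin n) (Fin n) ℝ}
    (hA : IsStable A) (hB : IsStable B)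
    (hAB : ¬ ∃ lam : ℝ, lam < 0 ∧ ∃ x : Fin n → ℝ, x ≠ 0 ∧ (A * B).mulVec x = lam • x)
    {t : ℝ} (ht : 0 ≤ t) : (t • 1 + A * B).det ≠ 0 := by
  intro h0
  rcases ht.eq_or_lt with rfl | ht
  · rw [zero_smul, zero_add] at h0
    exact ((isUnit_iff_isUnit_det _).1 (hA.isUnit.mul hB.isUnit)).ne_zero h0
  · obtain ⟨x, hx0, hx⟩ := exists_mulVec_eq_zero_iff.2 h0
    refine hAB ⟨-t, by linarith, x, hx0, ?_⟩
    rw [add_mulVec, smul_mulVec, one_mulVec] at hx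
    rw [neg_smul, eq_neg_iff_add_eq_zero, add_comm, hx]

/-- The frequency condition in real form: `1 + c ⬝ᵥ p` is the ratio of the determinants of
`ω² + A B` and `ω² + A²`. -/
lemma one_add_dotProduct_pos {n : ℕ} {A B : Matrix (Fin n) (Fin n) ℝ}
    (hA : IsStable A) (hB : IsStable B) {b c : Fin n → ℝ} (hbc : A - B = vecMulVec b c)
    (hAB : ¬ ∃ lam : ℝ, lam < 0 ∧ ∃ x : Fin n → ℝ, x ≠ 0 ∧ (A * B).mulVec x = lam • x)
    {ω : ℝ} {p q : Fin n → ℝ} (hp : A *ᵥ p + b = -(ω • q)) (hq : A *ᵥ q = ω • p) :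
    0 < 1 + c ⬝ᵥ p := by
  have hN := det_smul_one_add_pos (fun t => hA.det_smul_one_add_sq_ne_zero) (mul_self_nonneg ω)
  have hM := det_smul_one_add_pos (fun t => det_smul_one_add_mul_ne_zero hA hB hAB)
    (mul_self_nonneg ω)
  set N := (ω * ω) • (1 : Matrix (Fin n) (Fin n) ℝ) + A * A with hNdef
  have hNp : N *ᵥ p = -(A *ᵥ b) := by
    have h := congr_arg (A *ᵥ ·) hp
    simp only [mulVec_add, mulVec_neg, mulVec_smul, hq, smul_smul] at h
    rw [hNdef, add_mulVec, smul_mulVec, one_mulVec, ← mulVec_mulVec, eq_neg_iff_add_eq_zero,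
      add_assoc, h, add_neg_cancel]
  have hfac : (ω * ω) • 1 + A * B = N * (1 + vecMulVec p c) := by
    rw [Matrix.mul_add, Matrix.mul_one, mul_vecMulVec, hNp, neg_vecMulVec, ← mul_vecMulVec, ← hbc,
      hNdef, Matrix.mul_sub]
    abel
  rw [hfac, det_mul, vecMulVec_eq (Fin 1), det_one_add_replicateCol_mul_replicateRow] at hM
  exact pos_of_mul_pos_right hM hN.le

lemma frequency_condition {n : ℕ} {A B : Matrix (Fin n) (Fin n) ℝ}
    (hA : IsStable A) (hB : IsStable B) {b c : Fin n → ℝ} (hbc : A - B = vecMulVec b c)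
    (hAB : ¬ ∃ lam : ℝ, lam < 0 ∧ ∃ x : Fin n → ℝ, x ≠ 0 ∧ (A * B).mulVec x = lam • x)
    {ω : ℝ} {x : Fin n → ℂ} {u : ℂ} (hu : u ≠ 0)
    (hx : A.map (algebraMap ℝ ℂ) *ᵥ x + u • (fun i => (b i : ℂ)) = (ω * Complex.I) • x) :
    0 < (((fun i => (c i : ℂ)) ⬝ᵥ x + u) * star u).re := by
  set y : Fin n → ℂ := u⁻¹ • x with hy
  have hxy : x = u • y := by rw [hy, smul_smul, mul_inv_cancel₀ hu, one_smul]
  have hyeq : A.map (algebraMap ℝ ℂ) *ᵥ y + (fun i => (b i : ℂ)) = (ω * Complex.I) • y := by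
    have := congr_arg (u⁻¹ • ·) hx
    simp only [hxy, mulVec_smul, smul_add, smul_smul] at this
    rw [inv_mul_cancel₀ hu, one_smul, one_smul, mul_left_comm, inv_mul_cancel₀ hu, mul_one] at this
    exact this
  have key : 0 < 1 + c ⬝ᵥ (fun i => (y i).re) := by
    apply one_add_dotProduct_pos hA hB hbc hAB (ω := ω) (q := fun i => (y i).im)
    · ext i
      have := congr_arg Complex.re (congr_fun hyeq i)
      simpa [mulVec, dotProduct] using this
    · ext i
      have := congr_arg Complex.im (congr_fun hyeq i)
      simpa [mulVec, dotProduct] using this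
  have hre : ((fun i => (c i : ℂ)) ⬝ᵥ y).re = c ⬝ᵥ (fun i => (y i).re) := by
    simp [dotProduct]
  have heq : ((fun i => (c i : ℂ)) ⬝ᵥ x + u) * star u
      = (Complex.normSq u : ℂ) * (1 + (fun i => (c i : ℂ)) ⬝ᵥ y) := by
    rw [hxy, dotProduct_smul, Complex.normSq_eq_conj_mul_self, smul_eq_mul]
    simp only [Complex.star_def]
    ring
  rw [heq, Complex.re_ofReal_mul, Complex.add_re, Complex.one_re, hre]
  exact mul_pos (Complex.normSq_pos.2 hu) key

section PowTendsto

open Filter Topology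

attribute [local instance] Matrix.linftyOpNormedRing Matrix.linftyOpNormedAlgebra

lemma tendsto_pow_apply_of_spectrum_norm_lt_one {n : Type*} [Fintype n] [DecidableEq n]
    {C : Matrix n n ℂ} (hC : ∀ z ∈ spectrum ℂ C, ‖z‖ < 1) (i j : n) :
    Tendsto (fun k => (C ^ k) i j) atTop (𝓝 0) := by
  have : Nonempty n := ⟨i⟩
  have : CompleteSpace (Matrix n n ℂ) := FiniteDimensional.complete ℂ _
  have hρ : spectralRadius ℂ C < 1 := by
    simpa using spectrum.spectralRadius_lt_of_forall_lt C (r := 1) (fun z hz => hC z hz)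
  obtain ⟨r, hρr, hr1⟩ := ENNReal.lt_iff_exists_nnreal_btwn.1 hρ
  have hlim := spectrum.pow_nnnorm_pow_one_div_tendsto_nhds_spectralRadius C
  have hbound : ∀ᶠ k : ℕ in atTop, ‖C ^ k‖ ≤ (r : ℝ) ^ k := by
    filter_upwards [hlim.eventually_lt_const hρr, eventually_gt_atTop 0] with k hk hk0
    have hk0' : (k : ℝ) ≠ 0 := by positivity
    have h := ENNReal.rpow_le_rpow hk.le (z := k) (by positivity)
    rw [← ENNReal.rpow_mul, one_div, inv_mul_cancel₀ hk0', ENNReal.rpow_one, ENNReal.rpow_natCast]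
      at h
    exact_mod_cast h
  have hr1' : (r : ℝ) < 1 := by exact_mod_cast hr1
  have hnorm : Tendsto (fun k => C ^ k) atTop (𝓝 0) :=
    squeeze_zero_norm' hbound (tendsto_pow_atTop_nhds_zero_of_lt_one r.coe_nonneg hr1')
  have hcont : Continuous fun N : Matrix n n ℂ => N i j :=
    LinearMap.continuous_of_finiteDimensional (entryLinearMap ℂ ℂ i j)
  exact (hcont.tendsto 0).comp hnorm

end PowTendsto

namespace IsStable

variable {n : ℕ} {A : Matrix (Fin n) (Fin n) ℝ}

/-- The powers of the Cayley transform of a stable matrix tend to zero. -/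
lemma tendsto_cayley_pow_apply (hA : IsStable A) {M : Matrix (Fin n) (Fin n) ℝ}
    (hM : M * (1 - A) = 1 + A) (i j : Fin n) :
    Filter.Tendsto (fun k => (M ^ k) i j) Filter.atTop (nhds 0) := by
  set AC := A.map (algebraMap ℝ ℂ) with hAC
  set MC := M.map (algebraMap ℝ ℂ) with hMC
  have hMC' : MC * (1 - AC) = 1 + AC := by
    have := congr_arg (algebraMap ℝ ℂ).mapMatrix hM
    simp only [map_mul, map_sub, map_add, map_one] at this
    exact this
  have hspec : ∀ z ∈ spectrum ℂ MC, ‖z‖ < 1 := by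
    intro z hz
    by_contra hz1
    rw [not_lt] at hz1
    apply spectrum.mem_iff.1 hz
    rw [Algebra.algebraMap_eq_smul_one]
    have hprod : (z • 1 - MC) * (1 - AC) = (z - 1) • 1 - (z + 1) • AC := by
      rw [sub_mul, hMC', smul_mul_assoc, one_mul, smul_sub, sub_smul, add_smul, one_smul, one_smul]
      abel
    have hunit : IsUnit ((z - 1) • 1 - (z + 1) • AC) := by
      by_cases hz2 : z + 1 = 0
      · rw [hz2, zero_smul, sub_zero, isUnit_iff_isUnit_det, det_smul, det_one, mul_one]
        refine (IsUnit.mk0 _ ?_).pow _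
        rw [eq_neg_of_add_eq_zero_left hz2]; norm_num
      · have hre : 0 ≤ ((z - 1) / (z + 1)).re := by
          have hn : 1 ≤ Complex.normSq z := by
            rw [Complex.normSq_eq_norm_sq]; nlinarith
          rw [Complex.normSq_apply] at hn
          rw [Complex.div_re, ← add_div]
          apply div_nonneg _ (Complex.normSq_nonneg _)
          simp; nlinarith
        have h := hA.isUnit_smul_one_sub hre
        rw [isUnit_iff_isUnit_det] at h ⊢
        have e : (z - 1) • 1 - (z + 1) • AC = (z + 1) • (((z - 1) / (z + 1)) • 1 - AC) := by
          rw [smul_sub, smul_smul, mul_div_cancel₀ _ hz2]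
        rw [e, det_smul]
        exact ((IsUnit.mk0 _ hz2).pow _).mul h
    rw [← hprod, isUnit_iff_isUnit_det, det_mul] at hunit
    rw [isUnit_iff_isUnit_det]
    exact isUnit_of_mul_isUnit_left hunit
  have h := tendsto_pow_apply_of_spectrum_norm_lt_one hspec i j
  have hre := (Complex.continuous_re.tendsto 0).comp h
  refine (hre.congr fun k => ?_)
  have : MC ^ k = (M ^ k).map (algebraMap ℝ ℂ) := (map_pow (algebraMap ℝ ℂ).mapMatrix M k).symm
  simp [this]

/-- A symmetric solution of the Lyapunov inequality for a stable matrix is positive definite. -/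
lemma posDef_of_lyapunov (hA : IsStable A) {P : Matrix (Fin n) (Fin n) ℝ} (hP : P.IsHermitian)
    (hQ : ∀ x : Fin n → ℝ, x ≠ 0 → x ⬝ᵥ (P * A + Aᵀ * P) *ᵥ x < 0) : P.PosDef := by
  have hunit : IsUnit (1 - A) := by
    have h := hA.isUnit_smul_one_sub (μ := 1) (by simp)
    rw [isUnit_iff_isUnit_det, isUnit_iff_ne_zero] at h ⊢
    intro h0
    apply h
    have := (algebraMap ℝ ℂ).map_det (1 - A)
    rw [h0, map_zero, map_sub, map_one] at this
    rw [one_smul]; exact this.symm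
  have hdet := (isUnit_iff_isUnit_det _).1 hunit
  set M := (1 + A) * (1 - A)⁻¹ with hMdef
  have hM : M * (1 - A) = 1 + A := by
    rw [hMdef, Matrix.mul_assoc, nonsing_inv_mul _ hdet, Matrix.mul_one]
  have hstep (y : Fin n → ℝ) : ((1 - A) *ᵥ y) ⬝ᵥ P *ᵥ ((1 - A) *ᵥ y)
      = ((1 + A) *ᵥ y) ⬝ᵥ P *ᵥ ((1 + A) *ᵥ y) - 2 * (y ⬝ᵥ (P * A + Aᵀ * P) *ᵥ y) := by
    have h1 : (A *ᵥ y) ⬝ᵥ P *ᵥ y = y ⬝ᵥ (Aᵀ * P) *ᵥ y := by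
      rw [← mulVec_mulVec, dotProduct_mulVec y, vecMul_transpose]
    have h2 : y ⬝ᵥ P *ᵥ (A *ᵥ y) = y ⬝ᵥ (P * A) *ᵥ y := by rw [mulVec_mulVec]
    simp only [sub_mulVec, add_mulVec, one_mulVec, mulVec_sub, mulVec_add, dotProduct_sub,
      sub_dotProduct, add_dotProduct, dotProduct_add, h1, h2]
    ring
  have hlt (x : Fin n → ℝ) (hx : x ≠ 0) : (M *ᵥ x) ⬝ᵥ P *ᵥ (M *ᵥ x) < x ⬝ᵥ P *ᵥ x := by
    set y := (1 - A)⁻¹ *ᵥ x with hy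
    have hxy : (1 - A) *ᵥ y = x := by
      rw [hy, mulVec_mulVec, mul_nonsing_inv _ hdet, one_mulVec]
    have hy0 : y ≠ 0 := by
      intro h
      rw [h, mulVec_zero] at hxy
      exact hx hxy.symm
    have hMx : M *ᵥ x = (1 + A) *ᵥ y := by rw [← hxy, mulVec_mulVec, hM]
    rw [hMx]
    conv_rhs => rw [← hxy, hstep]
    linarith [hQ y hy0]
  have hle (x : Fin n → ℝ) : (M *ᵥ x) ⬝ᵥ P *ᵥ (M *ᵥ x) ≤ x ⬝ᵥ P *ᵥ x := by
    by_cases hx : x = 0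
    · simp [hx]
    · exact (hlt x hx).le
  have hnn (x : Fin n → ℝ) : 0 ≤ x ⬝ᵥ P *ᵥ x := by
    have hanti : Antitone fun k : ℕ => ((M ^ k) *ᵥ x) ⬝ᵥ P *ᵥ ((M ^ k) *ᵥ x) := by
      refine antitone_nat_of_succ_le fun k => ?_
      rw [pow_succ', ← mulVec_mulVec]
      exact hle _
    have hvec : Filter.Tendsto (fun k : ℕ => (M ^ k) *ᵥ x) Filter.atTop (nhds 0) := by
      rw [tendsto_pi_nhds]
      intro i
      have := tendsto_finsetSum Finset.univ fun j _ =>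
        (hA.tendsto_cayley_pow_apply hM i j).mul_const (x j)
      simpa [mulVec, dotProduct] using this
    have hcont : Continuous fun y : Fin n → ℝ => y ⬝ᵥ P *ᵥ y := by fun_prop
    have hlim := (hcont.tendsto 0).comp hvec
    rw [zero_dotProduct] at hlim
    simpa using hanti.le_of_tendsto hlim 0
  refine PosDef.of_dotProduct_mulVec_pos hP fun x hx => ?_
  rw [star_trivial]
  exact (hnn _).trans_lt (hlt x hx)

end IsStable

lemma Matrix.PosSemidef.abs_apply_le_trace {n : Type*} [Fintype n] [DecidableEq n]
    {X : Matrix n n ℝ} (hX : X.PosSemidef) (i j : n) : |X i j| ≤ X.trace := by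
  have hdiag (k : n) : X k k ≤ X.trace :=
    Finset.single_le_sum (f := fun k => X k k) (fun l _ => hX.diag_nonneg) (Finset.mem_univ k)
  have hsymm : X j i = X i j := by simpa using hX.isHermitian.apply i j
  have hform (s : ℝ) : 0 ≤ X i i + s * X i j + (s * X j i + s * (s * X j j)) := by
    have := hX.dotProduct_mulVec_nonneg (Pi.single i 1 + Pi.single j s)
    simp [mulVec_add, add_dotProduct, dotProduct_add] at this
    linarith
  have h1 := hform 1
  have h2 := hform (-1)
  rw [abs_le]
  constructor <;> linarith [hdiag i, hdiag j]

section Separation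

attribute [local instance] Matrix.normedAddCommGroup Matrix.normedSpace

lemma isCompact_posSemidef_pairs (n : Type*) [Fintype n] :
    IsCompact {p : Matrix n n ℝ × Matrix n n ℝ |
      p.1.PosSemidef ∧ p.2.PosSemidef ∧ p.1.trace + p.2.trace = 1} := by
  classical
  have hclosed : IsClosed {X : Matrix n n ℝ | X.PosSemidef} := by
    simp only [posSemidef_iff_dotProduct_mulVec, IsHermitian, Set.ofPred_and, Set.ofPred_forall]
    refine IsClosed.inter (isClosed_eq (by fun_prop) continuous_id) (isClosed_iInter fun x => ?_)
    exact isClosed_le continuous_const (by fun_prop)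
  refine Metric.isCompact_of_isClosed_isBounded ?_ ?_
  · refine (hclosed.preimage continuous_fst).inter ((hclosed.preimage continuous_snd).inter ?_)
    exact isClosed_eq (by fun_prop) continuous_const
  · refine isBounded_iff_forall_norm_le.2 ⟨1, fun p hp => ?_⟩
    obtain ⟨h1, h2, h3⟩ := hp
    have t1 := h1.trace_nonneg
    have t2 := h2.trace_nonneg
    refine max_le ?_ ?_ <;> refine (norm_le_iff zero_le_one).2 fun i j => ?_
    · exact (h1.abs_apply_le_trace i j).trans (by linarith)
    · exact (h2.abs_apply_le_trace i j).trans (by linarith)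

/-- Duality for the pair of Lyapunov inequalities, by separation from a compact convex set. -/
lemma exists_lyapunov_of_dual {n : Type*} [Fintype n] [DecidableEq n] {A B : Matrix n n ℝ}
    (h : ∀ X Y : Matrix n n ℝ, X.PosSemidef → Y.PosSemidef →
      A * X + X * Aᵀ + (B * Y + Y * Bᵀ) = 0 → X + Y = 0) :
    ∃ P : Matrix n n ℝ, P.IsHermitian ∧
      (∀ x : n → ℝ, x ≠ 0 → x ⬝ᵥ (P * A + Aᵀ * P) *ᵥ x < 0) ∧
      (∀ x : n → ℝ, x ≠ 0 → x ⬝ᵥ (P * B + Bᵀ * P) *ᵥ x < 0) := by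
  set L : Matrix n n ℝ × Matrix n n ℝ →ₗ[ℝ] Matrix n n ℝ :=
    { toFun := fun p => A * p.1 + p.1 * Aᵀ + (B * p.2 + p.2 * Bᵀ)
      map_add' := fun p q => by
        simp only [Prod.fst_add, Prod.snd_add, Matrix.mul_add, Matrix.add_mul]; abel
      map_smul' := fun r p => by
        simp only [Prod.smul_fst, Prod.smul_snd, Matrix.mul_smul, Matrix.smul_mul, smul_add,
          RingHom.id_apply] } with hL
  set 𝒯 := {p : Matrix n n ℝ × Matrix n n ℝ |
      p.1.PosSemidef ∧ p.2.PosSemidef ∧ p.1.trace + p.2.trace = 1}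
  have hconv : Convex ℝ 𝒯 := by
    rintro p ⟨p1, p2, p3⟩ q ⟨q1, q2, q3⟩ a b ha hb hab
    refine ⟨(p1.smul ha).add (q1.smul hb), (p2.smul ha).add (q2.smul hb), ?_⟩
    simp only [Prod.fst_add, Prod.snd_add, Prod.smul_fst, Prod.smul_snd, trace_add, trace_smul,
      smul_eq_mul]
    linear_combination a * p3 + b * q3 + hab
  have hcompact : IsCompact (L '' 𝒯) :=
    (isCompact_posSemidef_pairs n).image (LinearMap.continuous_of_finiteDimensional L)
  have h0 : (0 : Matrix n n ℝ) ∉ L '' 𝒯 := by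
    rintro ⟨p, ⟨p1, p2, p3⟩, hp⟩
    have := congr_arg trace (h p.1 p.2 p1 p2 hp)
    rw [trace_add, p3, trace_zero] at this
    exact one_ne_zero this
  have : LocallyConvexSpace ℝ (Matrix n n ℝ) :=
    inferInstanceAs (LocallyConvexSpace ℝ (n → n → ℝ))
  obtain ⟨f, u, hu, hf⟩ := geometric_hahn_banach_point_closed (hconv.linear_image L)
    hcompact.isClosed h0
  rw [map_zero] at hu
  have hfpos (p) (hp : p ∈ 𝒯) : 0 < f (L p) := hu.trans (hf _ ⟨p, hp, rfl⟩)
  set G : Matrix n n ℝ := of fun i j => f (single i j 1) with hG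
  have hfG (y x : n → ℝ) : f (vecMulVec y x) = y ⬝ᵥ G *ᵥ x := by
    conv_lhs => rw [matrix_eq_sum_single (vecMulVec y x)]
    simp only [map_sum, dotProduct, mulVec, Finset.mul_sum]
    refine Finset.sum_congr rfl fun i _ => Finset.sum_congr rfl fun j _ => ?_
    have : single i j (vecMulVec y x i j) = (y i * x j) • single i j (1 : ℝ) := by
      rw [smul_single, smul_eq_mul, mul_one]; rfl
    rw [this, map_smul, smul_eq_mul, hG, of_apply]; ring
  have hfC (C : Matrix n n ℝ) (x : n → ℝ) (r : ℝ) :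
      f (C * (r • vecMulVec x x) + (r • vecMulVec x x) * Cᵀ)
        = r * (x ⬝ᵥ (G * C + Cᵀ * G) *ᵥ x) := by
    rw [Matrix.mul_smul, Matrix.smul_mul, mul_vecMulVec, vecMulVec_mul, vecMul_transpose, map_add,
      map_smul, map_smul, hfG, hfG, add_mulVec, dotProduct_add, ← mulVec_mulVec, ← mulVec_mulVec,
      dotProduct_mulVec x Cᵀ, vecMul_transpose, smul_eq_mul, smul_eq_mul]
    ring
  have hform (C : Matrix n n ℝ) (x : n → ℝ) :
      x ⬝ᵥ (-(G + Gᵀ) * C + Cᵀ * -(G + Gᵀ)) *ᵥ x = -2 * (x ⬝ᵥ (G * C + Cᵀ * G) *ᵥ x) := by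
    have h1 : x ⬝ᵥ (Gᵀ * C + Cᵀ * Gᵀ) *ᵥ x = x ⬝ᵥ (G * C + Cᵀ * G) *ᵥ x := by
      have : Gᵀ * C + Cᵀ * Gᵀ = (G * C + Cᵀ * G)ᵀ := by
        rw [transpose_add, transpose_mul, transpose_mul, transpose_transpose, add_comm]
      rw [this, mulVec_transpose, dotProduct_comm, ← dotProduct_mulVec]
    have h2 : -(G + Gᵀ) * C + Cᵀ * -(G + Gᵀ)
        = -((G * C + Cᵀ * G) + (Gᵀ * C + Cᵀ * Gᵀ)) := by noncomm_ring
    rw [h2, neg_mulVec, dotProduct_neg, add_mulVec, dotProduct_add, h1]; ring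
  have hxx (x : n → ℝ) (hx : x ≠ 0) : 0 < x ⬝ᵥ x := by
    simpa using dotProduct_star_self_pos_iff.2 hx
  have hpsd (x : n → ℝ) (hx : x ≠ 0) : ((x ⬝ᵥ x)⁻¹ • vecMulVec x x).PosSemidef := by
    simpa using (posSemidef_vecMulVec_self_star x).smul (inv_nonneg.2 (hxx x hx).le)
  have htr (x : n → ℝ) (hx : x ≠ 0) : ((x ⬝ᵥ x)⁻¹ • vecMulVec x x).trace = 1 := by
    rw [trace_smul, trace_vecMulVec, smul_eq_mul, inv_mul_cancel₀ (hxx x hx).ne']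
  refine ⟨-(G + Gᵀ), ?_, fun x hx => ?_, fun x hx => ?_⟩
  · rw [IsHermitian, conjTranspose_eq_transpose_of_trivial, transpose_neg, transpose_add,
      transpose_transpose, add_comm]
  · have := hfpos ((x ⬝ᵥ x)⁻¹ • vecMulVec x x, 0)
      ⟨hpsd x hx, PosSemidef.zero, by simp only [htr x hx, trace_zero, add_zero]⟩
    have e : L ((x ⬝ᵥ x)⁻¹ • vecMulVec x x, 0)
        = A * ((x ⬝ᵥ x)⁻¹ • vecMulVec x x) + ((x ⬝ᵥ x)⁻¹ • vecMulVec x x) * Aᵀ := by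
      simp [hL]
    rw [e, hfC] at this
    have := pos_of_mul_pos_right this (inv_nonneg.2 (hxx x hx).le)
    rw [hform]; linarith
  · have := hfpos (0, (x ⬝ᵥ x)⁻¹ • vecMulVec x x)
      ⟨PosSemidef.zero, hpsd x hx, by simp only [htr x hx, trace_zero, zero_add]⟩
    have e : L (0, (x ⬝ᵥ x)⁻¹ • vecMulVec x x)
        = B * ((x ⬝ᵥ x)⁻¹ • vecMulVec x x) + ((x ⬝ᵥ x)⁻¹ • vecMulVec x x) * Bᵀ := by
      simp [hL]
    rw [e, hfC] at this
    have := pos_of_mul_pos_right this (inv_nonneg.2 (hxx x hx).le)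
    rw [hform]; linarith

end Separation

lemma Matrix.exists_eq_vecMulVec_of_rank_eq_one {m n : Type*} [Fintype n] [Finite m]
    {M : Matrix m n ℝ} (hM : M.rank = 1) : ∃ b c, M = vecMulVec b c := by
  classical
  obtain ⟨b, hb⟩ := ((Submodule.finrank_le_one_iff_isPrincipal _).1 hM.le).principal
  have (j : n) : ∃ r : ℝ, r • b = M.col j := by
    rw [← Submodule.mem_span_singleton, ← hb]
    exact ⟨Pi.single j 1, by simp⟩
  choose c hc using this
  refine ⟨b, c, ?_⟩
  ext i j
  simpa [vecMulVec_apply, mul_comm] using (congr_fun (hc j) i).symm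

open scoped ComplexOrder in
lemma Matrix.PosSemidef.map_ofReal {n : Type*} [Finite n] {X : Matrix n n ℝ}
    (hX : X.PosSemidef) : (X.map (algebraMap ℝ ℂ)).PosSemidef := by
  obtain ⟨m, v, rfl⟩ := posSemidef_iff_eq_sum_vecMulVec.1 hX
  refine posSemidef_iff_eq_sum_vecMulVec.2 ⟨m, fun i k => (v i k : ℂ), ?_⟩
  ext i j
  simp [Matrix.sum_apply, vecMulVec_apply]

lemma add_eq_zero_of_dual {n : ℕ} {A B : Matrix (Fin n) (Fin n) ℝ}
    (hA : IsStable A) (hB : IsStable B) {b c : Fin n → ℝ} (hbc : A - B = vecMulVec b c)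
    (hAB : ¬ ∃ lam : ℝ, lam < 0 ∧ ∃ x : Fin n → ℝ, x ≠ 0 ∧ (A * B).mulVec x = lam • x)
    {X Y : Matrix (Fin n) (Fin n) ℝ} (hX : X.PosSemidef) (hY : Y.PosSemidef)
    (hXY : A * X + X * Aᵀ + (B * Y + Y * Bᵀ) = 0) : X + Y = 0 := by
  set φ : Matrix (Fin n) (Fin n) ℝ →+* Matrix (Fin n) (Fin n) ℂ := (algebraMap ℝ ℂ).mapMatrix
    with hφ
  have hφT (M : Matrix (Fin n) (Fin n) ℝ) : (φ M)ᴴ = φ Mᵀ := by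
    ext i j; simp [hφ]
  have hYT : Yᵀ = Y := by simpa using hY.isHermitian.eq
  set b' : Matrix (Fin n) (Fin 1) ℂ := of fun i _ => (b i : ℂ) with hb'
  set c' : Matrix (Fin n) (Fin 1) ℂ := of fun i _ => (c i : ℂ) with hc'
  have hbc' : b' * c'ᴴ = φ (A - B) := by
    rw [hbc]; ext i j; simp [hφ, hb', hc', Matrix.mul_apply, vecMulVec_apply]
  have hcb' : c' * b'ᴴ = φ (A - B)ᵀ := by
    rw [← hφT, ← hbc', conjTranspose_mul, conjTranspose_conjTranspose]
  have hφZ : φ (X + Y) = 0 := by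
    refine eq_zero_of_frequency_condition (A := φ A) (Y := φ Y) (b := b') (c := c')
      hY.map_ofReal (hX.add hY).map_ofReal ?_ ?_ ?_ ?_
    · rw [← map_sub, add_sub_cancel_right]
      exact hX.map_ofReal
    · rw [conjTranspose_mul, hφT, hφT, hYT, ← Matrix.mul_assoc, hbc', Matrix.mul_assoc, hcb']
      rw [← map_mul, ← map_mul, ← map_mul, ← map_mul, ← map_add, ← map_add]
      congr 1
      rw [transpose_sub, ← sub_eq_zero, ← hXY]
      noncomm_ring
    · exact fun ω x hx => hA.eq_zero_of_mulVec_eq_smul (by simp) hx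
    · intro ω x u hu hx
      have hstar : star (c'.col 0) = fun i => (c i : ℂ) := by ext i; simp [hc']
      rw [hstar]
      exact frequency_condition hA hB hbc hAB hu hx
  ext i j
  have := congr_fun (congr_fun hφZ i) j
  exact Complex.ofReal_injective this

lemma HasCQLF.not_exists_neg_eigenvalue {n : ℕ} {A B : Matrix (Fin n) (Fin n) ℝ}
    (hA : IsUnit A) (h : HasCQLF A B) :
    ¬ ∃ lam : ℝ, lam < 0 ∧ ∃ x : Fin n → ℝ, x ≠ 0 ∧ (A * B).mulVec x = lam • x := by
  rintro ⟨lam, hlam, x, hx, hABx⟩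
  obtain ⟨P, hP, hPA, hPB⟩ := h
  have hPT : Pᵀ = P := by simpa using hP.isHermitian.eq
  have hform (C : Matrix (Fin n) (Fin n) ℝ) (z : Fin n → ℝ) :
      z ⬝ᵥ (P * C + Cᵀ * P) *ᵥ z = 2 * ((C *ᵥ z) ⬝ᵥ P *ᵥ z) := by
    have h1 : z ⬝ᵥ P *ᵥ (C *ᵥ z) = (C *ᵥ z) ⬝ᵥ P *ᵥ z := by
      rw [dotProduct_mulVec, ← mulVec_transpose, hPT, dotProduct_comm]
    rw [add_mulVec, dotProduct_add, ← mulVec_mulVec, ← mulVec_mulVec, h1,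
      dotProduct_mulVec z Cᵀ, vecMul_transpose]
    ring
  obtain ⟨y, hy⟩ := (mulVec_surjective_iff_isUnit.2 hA) x
  have hy0 : y ≠ 0 := by
    rintro rfl
    exact hx (by rw [← hy, mulVec_zero])
  have hBx : B *ᵥ x = lam • y := by
    apply mulVec_injective_iff_isUnit.2 hA
    rw [mulVec_mulVec, mulVec_smul, hABx, hy]
  have hneg {C : Matrix (Fin n) (Fin n) ℝ} (hC : (-(P * C + Cᵀ * P)).PosDef) {z : Fin n → ℝ}
      (hz : z ≠ 0) : (C *ᵥ z) ⬝ᵥ P *ᵥ z < 0 := by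
    have := hC.dotProduct_mulVec_pos hz
    rw [star_trivial, neg_mulVec, dotProduct_neg, hform] at this
    linarith
  have h1 := hneg hPA hy0
  have h2 := hneg hPB hx
  have hsymm : y ⬝ᵥ P *ᵥ x = x ⬝ᵥ P *ᵥ y := by
    rw [dotProduct_mulVec, ← mulVec_transpose, hPT, dotProduct_comm]
  rw [hy] at h1
  rw [hBx, smul_dotProduct, smul_eq_mul, hsymm] at h2
  nlinarith

/-- **Shorten–Narendra theorem.** For stable `A`, `B` with `A - B` of rank one, a CQLF exists
iff `A·B` has no real negative eigenvalue. -/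
theorem shorten_narendra {n : ℕ} (A B : Matrix (Fin n) (Fin n) ℝ)
    (hA : IsStable A) (hB : IsStable B) (hrank : (A - B).rank = 1) :
    HasCQLF A B ↔
      ¬ ∃ lam : ℝ, lam < 0 ∧ ∃ x : Fin n → ℝ, x ≠ 0 ∧ (A * B).mulVec x = lam • x := by
  refine ⟨HasCQLF.not_exists_neg_eigenvalue hA.isUnit, fun hAB => ?_⟩
  obtain ⟨b, c, hbc⟩ := exists_eq_vecMulVec_of_rank_eq_one hrank
  obtain ⟨P, hP, hPA, hPB⟩ := exists_lyapunov_of_dual fun X Y hX hY hXY =>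
    add_eq_zero_of_dual hA hB hbc hAB hX hY hXY
  have hherm (C : Matrix (Fin n) (Fin n) ℝ) : (-(P * C + Cᵀ * P)).IsHermitian := by
    have hPT : Pᵀ = P := by simpa using hP.eq
    rw [IsHermitian, conjTranspose_eq_transpose_of_trivial, transpose_neg, transpose_add,
      transpose_mul, transpose_mul, transpose_transpose, hPT, add_comm]
  refine ⟨P, hA.posDef_of_lyapunov hP hPA, ?_, ?_⟩
  · refine PosDef.of_dotProduct_mulVec_pos (hherm A) fun x hx => ?_
    rw [star_trivial, neg_mulVec, dotProduct_neg]
    linarith [hPA x hx]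
  · refine PosDef.of_dotProduct_mulVec_pos (hherm B) fun x hx => ?_
    rw [star_trivial, neg_mulVec, dotProduct_neg]
    linarith [hPB x hx]
end

section
/- Let A and B be real n×n stable matrices with A − B of rank one. Suppose there exist nonzero real positive semidefinite symmetric matrices X and Y such that A·X + X·Aᵀ + B·Y + Y·Bᵀ = 0. Then there exist nonzero vectors v, w ∈ ℝⁿ such that A·v·vᵀ + v·vᵀ·Aᵀ + B·w·wᵀ + w·wᵀ·Bᵀ = 0. -/
open Matrix

/-- A real matrix `M` for which `M + t` is invertible for all `t ≥ s` has `0 < det (M + s)`. -/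
lemma det_add_smul_one_pos {ι : Type*} [Fintype ι] [DecidableEq ι] (M : Matrix ι ι ℝ) (s : ℝ)
    (h : ∀ t, s ≤ t → (M + t • (1 : Matrix ι ι ℝ)).det ≠ 0) :
    0 < (M + s • (1 : Matrix ι ι ℝ)).det := by
  have heval (t : ℝ) : (-M).charpoly.eval t = (M + t • (1 : Matrix ι ι ℝ)).det := by
    rw [Matrix.eval_charpoly, sub_neg_eq_add, add_comm, scalar_apply, smul_one_eq_diagonal]
  have hmonic := (-M).charpoly_monic
  rcases Nat.eq_zero_or_pos (-M).charpoly.natDegree with h0 | hpos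
  · rw [← heval, hmonic.natDegree_eq_zero.mp h0]
    simp
  · have htop := (-M).charpoly.tendsto_atTop_of_leadingCoeff_nonneg
      (Polynomial.natDegree_pos_iff_degree_pos.mp hpos)
      (by rw [hmonic.leadingCoeff]; exact zero_le_one)
    by_contra hneg
    obtain ⟨T, hT0, hsT⟩ :=
      ((htop.eventually_ge_atTop 0).and (Filter.eventually_ge_atTop s)).exists
    obtain ⟨t, ht, ht0⟩ := intermediate_value_Icc hsT
      (-M).charpoly.continuous.continuousOn ⟨(heval s).trans_le (not_lt.mp hneg), hT0⟩
    exact h t ht.1 (by rw [← heval]; exact ht0)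

/-- A stable matrix has no eigenvector with a purely imaginary eigenvalue. -/
lemma IsStable.eq_zero_of_mulVec_eq {n : ℕ} {A : Matrix (Fin n) (Fin n) ℝ} (hA : IsStable A)
    {ω : ℝ} {f : Fin n → ℂ}
    (hf : A.map (algebraMap ℝ ℂ) *ᵥ f = (Complex.I * ω) • f) : f = 0 := by
  by_contra hne
  have hmem : Complex.I * ω ∈ spectrum ℂ (A.map (algebraMap ℝ ℂ)) := by
    rw [← Matrix.spectrum_toLin', ← Module.End.hasEigenvalue_iff_mem_spectrum]
    exact Module.End.hasEigenvalue_of_hasEigenvector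
      (Module.End.hasEigenvector_iff.mpr
        ⟨Module.End.mem_eigenspace_iff.mpr (by simpa using hf), hne⟩)
  simpa using hA _ hmem

lemma map_mulVec_ofReal {ι κ : Type*} [Fintype κ] (M : Matrix ι κ ℝ) (v : κ → ℝ) :
    M.map (algebraMap ℝ ℂ) *ᵥ (fun i => (v i : ℂ)) = fun i => ((M *ᵥ v) i : ℂ) := by
  ext i; simp [mulVec, dotProduct]

lemma re_map_mulVec {ι κ : Type*} [Fintype κ] (M : Matrix ι κ ℝ) (f : κ → ℂ) (i : ι) :
    ((M.map (algebraMap ℝ ℂ) *ᵥ f) i).re = (M *ᵥ fun j => (f j).re) i := by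
  simp [mulVec, dotProduct]

lemma im_map_mulVec {ι κ : Type*} [Fintype κ] (M : Matrix ι κ ℝ) (f : κ → ℂ) (i : ι) :
    ((M.map (algebraMap ℝ ℂ) *ᵥ f) i).im = (M *ᵥ fun j => (f j).im) i := by
  simp [mulVec, dotProduct]

lemma IsStable.det_ne_zero {n : ℕ} {A : Matrix (Fin n) (Fin n) ℝ} (hA : IsStable A) :
    A.det ≠ 0 := by
  intro h
  obtain ⟨v, hv, hAv⟩ := Matrix.exists_mulVec_eq_zero_iff.mpr h
  refine hv (funext fun i => ?_)
  have := hA.eq_zero_of_mulVec_eq (ω := 0) (f := fun i => (v i : ℂ))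
    (by rw [map_mulVec_ofReal, hAv]; ext; simp)
  simpa using congrFun this i

lemma IsStable.det_sq_add_ne_zero {n : ℕ} {A : Matrix (Fin n) (Fin n) ℝ} (hA : IsStable A)
    {t : ℝ} (ht : 0 ≤ t) : (A * A + t • (1 : Matrix (Fin n) (Fin n) ℝ)).det ≠ 0 := by
  intro h
  obtain ⟨v, hv, hAv⟩ := Matrix.exists_mulVec_eq_zero_iff.mpr h
  obtain ⟨r, rfl⟩ : ∃ r : ℝ, t = r ^ 2 := ⟨√t, (Real.sq_sqrt ht).symm⟩
  replace hAv : A *ᵥ (A *ᵥ v) = -(r ^ 2) • v := by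
    rw [add_mulVec, smul_mulVec, one_mulVec, ← mulVec_mulVec] at hAv
    rw [neg_smul]; exact eq_neg_of_add_eq_zero_left hAv
  have key := hA.eq_zero_of_mulVec_eq (ω := r)
    (f := (fun i => ((A *ᵥ v) i : ℂ)) + (Complex.I * r) • fun i => (v i : ℂ)) (by
      rw [mulVec_add, mulVec_smul, map_mulVec_ofReal, map_mulVec_ofReal, hAv]
      ext i
      simp only [Pi.add_apply, Pi.smul_apply, smul_eq_mul]
      push_cast
      linear_combination -(r : ℂ) ^ 2 * v i * Complex.I_sq)
  have hAv0 : A *ᵥ v = 0 := funext fun i => by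
    simpa using congrArg Complex.re (congrFun key i)
  exact hA.det_ne_zero (Matrix.exists_mulVec_eq_zero_iff.mp ⟨v, hv, hAv0⟩)

/-- If `det (A * B + t) > 0` for all `t ≥ 0`, where `B = A - b cᵀ`, then the real part of the
frequency response `cᵀ (A - iω)⁻¹ b` is less than one. -/
lemma IsStable.re_frequency_response_lt {n : ℕ} {A : Matrix (Fin n) (Fin n) ℝ} (hA : IsStable A)
    {b c : Fin n → ℝ}
    (hdet : ∀ t : ℝ, 0 ≤ t →
      0 < (A * (A - vecMulVec b c) + t • (1 : Matrix (Fin n) (Fin n) ℝ)).det)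
    {ω : ℝ} {g : ℂ} (hg : g ≠ 0) {f : Fin n → ℂ}
    (hf : A.map (algebraMap ℝ ℂ) *ᵥ f - g • (fun i => (b i : ℂ)) = (Complex.I * ω) • f) :
    (((fun i => (c i : ℂ)) ⬝ᵥ f) * star g).re < Complex.normSq g := by
  set h : Fin n → ℂ := g⁻¹ • f with hh
  have hfh : f = g • h := by rw [hh, smul_smul, mul_inv_cancel₀ hg, one_smul]
  have hh' : A.map (algebraMap ℝ ℂ) *ᵥ h = (Complex.I * ω) • h + fun i => (b i : ℂ) := by
    have := congrArg (g⁻¹ • ·) (sub_eq_iff_eq_add.mp hf)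
    simp only [smul_add, smul_smul, inv_mul_cancel₀ hg, one_smul, ← mulVec_smul] at this
    rw [hh, this, smul_smul, mul_comm]
  set p : Fin n → ℝ := fun j => (h j).re with hp
  set q : Fin n → ℝ := fun j => (h j).im with hq
  have hre : A *ᵥ p = b - ω • q := funext fun i => by
    rw [hp, ← re_map_mulVec, hh']; simp [hq]; ring
  have him : A *ᵥ q = ω • p := funext fun i => by
    rw [hq, ← im_map_mulVec, hh']; simp [hp]
  have hpb : (A * A + (ω ^ 2) • (1 : Matrix (Fin n) (Fin n) ℝ)) *ᵥ p = A *ᵥ b := by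
    rw [add_mulVec, smul_mulVec, one_mulVec, ← mulVec_mulVec, hre, mulVec_sub, mulVec_smul, him,
      smul_smul, sq]
    abel
  have hfac : A * (A - vecMulVec b c) + (ω ^ 2) • (1 : Matrix (Fin n) (Fin n) ℝ)
      = (A * A + (ω ^ 2) • (1 : Matrix (Fin n) (Fin n) ℝ)) * (1 - vecMulVec p c) := by
    rw [mul_sub, mul_sub, mul_one, Matrix.mul_vecMulVec, Matrix.mul_vecMulVec, hpb]
    abel
  have hdet1 : (1 - vecMulVec p c).det = 1 - c ⬝ᵥ p := by
    rw [vecMulVec_eq Unit, det_one_sub_mul_comm]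
    simp
  have h1 := hdet (ω ^ 2) (sq_nonneg ω)
  have h2 := det_add_smul_one_pos (A * A) (ω ^ 2)
    fun t ht => hA.det_sq_add_ne_zero ((sq_nonneg ω).trans ht)
  rw [hfac, det_mul, hdet1] at h1
  have h3 : c ⬝ᵥ p < 1 := by linarith [pos_of_mul_pos_right h1 h2.le]
  have h4 : (((fun i => (c i : ℂ)) ⬝ᵥ f) * star g).re = Complex.normSq g * (c ⬝ᵥ p) := by
    have hcp : ((fun i => (c i : ℂ)) ⬝ᵥ h).re = c ⬝ᵥ p := by simp [dotProduct, hp]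
    rw [hfh, dotProduct_smul, smul_eq_mul, mul_right_comm, ← hcp]
    have : g * star g = (Complex.normSq g : ℂ) := Complex.mul_conj g
    rw [this, Complex.re_ofReal_mul]
  rw [h4]
  nlinarith [Complex.normSq_pos.mpr hg]

/-- A positive semidefinite matrix has a symmetric square root together with the
Moore–Penrose inverse of that root. -/
lemma Matrix.PosSemidef.exists_sqrt_pinv {ι : Type*} [Fintype ι] [DecidableEq ι]
    {Z : Matrix ι ι ℝ} (hZ : Z.PosSemidef) :
    ∃ S T : Matrix ι ι ℝ, Sᵀ = S ∧ Tᵀ = T ∧ S * S = Z ∧ S * T = T * S ∧ S * T * S = S ∧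
      T * S * T = T := by
  set U : Matrix ι ι ℝ := (hZ.isHermitian.eigenvectorUnitary).1
  have hUU : Uᵀ * U = 1 := by
    have := Unitary.coe_star_mul_self hZ.isHermitian.eigenvectorUnitary
    rwa [star_eq_conjTranspose, conjTranspose_eq_transpose_of_trivial] at this
  have hspec : Z = U * diagonal hZ.isHermitian.eigenvalues * Uᵀ := by
    have := hZ.isHermitian.spectral_theorem
    rw [Unitary.conjStarAlgAut_apply, star_eq_conjTranspose,
      conjTranspose_eq_transpose_of_trivial] at this
    exact this
  set d : ι → ℝ := fun i => √(hZ.isHermitian.eigenvalues i) with hd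
  have hconj (a a' : ι → ℝ) : U * diagonal a * Uᵀ * (U * diagonal a' * Uᵀ)
      = U * diagonal (fun i => a i * a' i) * Uᵀ := by
    rw [← diagonal_mul_diagonal]
    calc _ = U * diagonal a * (Uᵀ * U) * diagonal a' * Uᵀ := by simp only [Matrix.mul_assoc]
      _ = _ := by rw [hUU, Matrix.mul_one]; simp only [Matrix.mul_assoc]
  have hsymm (a : ι → ℝ) : (U * diagonal a * Uᵀ)ᵀ = U * diagonal a * Uᵀ := by
    simp [transpose_mul, Matrix.mul_assoc]
  refine ⟨U * diagonal d * Uᵀ, U * diagonal (fun i => (d i)⁻¹) * Uᵀ, hsymm _, hsymm _,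
    ?_, ?_, ?_, ?_⟩
  · conv_rhs => rw [hspec]
    rw [hconj]
    simp only [hd, Real.mul_self_sqrt (hZ.eigenvalues_nonneg _)]
  · simp only [hconj, mul_comm]
  · simp only [hconj, mul_inv_mul_cancel]
  · simp only [hconj]
    congr 3
    ext i
    simpa using mul_inv_mul_cancel (d i)⁻¹

/-- A real skew-symmetric matrix is unitarily diagonalizable with imaginary eigenvalues. -/
lemma exists_unitary_of_skew {ι : Type*} [Fintype ι] [DecidableEq ι] {K : Matrix ι ι ℝ}
    (hK : Kᵀ = -K) :
    ∃ (U : Matrix ι ι ℂ) (ω : ι → ℝ), U * Uᴴ = 1 ∧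
      ∀ k, K.map (algebraMap ℝ ℂ) *ᵥ U.col k = (Complex.I * ω k) • U.col k := by
  have hH : ((-Complex.I) • K.map (algebraMap ℝ ℂ)).IsHermitian := by
    ext i j
    have := congrFun (congrFun hK i) j
    rw [transpose_apply] at this
    simp [this]
  refine ⟨hH.eigenvectorUnitary, hH.eigenvalues,
    Unitary.coe_mul_star_self hH.eigenvectorUnitary, fun k => ?_⟩
  have h := hH.mulVec_eigenvectorBasis k
  rw [hH.eigenvectorUnitary_col_eq]
  have h' := congrArg (Complex.I • ·) h
  simp only [smul_mulVec, smul_smul, mul_neg, Complex.I_mul_I, neg_neg, one_smul] at h'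
  rw [h']
  ext i
  simp [mul_assoc]

lemma exists_vecMulVec_of_rank_eq_one {ι κ : Type*} [Fintype ι] [Fintype κ] [DecidableEq κ]
    {M : Matrix ι κ ℝ} (hM : M.rank = 1) : ∃ b c, M = vecMulVec b c := by
  obtain ⟨b, -, hb⟩ := finrank_eq_one_iff'.mp hM
  choose c hc using fun j => hb ⟨M *ᵥ Pi.single j 1, ⟨_, rfl⟩⟩
  refine ⟨b, c, ?_⟩
  ext i j
  have := congrFun (congrArg Subtype.val (hc j)) i
  simp only [SetLike.val_smul, Pi.smul_apply, smul_eq_mul, mulVec_single_one, col_apply] at this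
  rw [vecMulVec_apply, mul_comm, this]

/-- Under the frequency-domain condition `det (A * B + t) > 0` for all `t ≥ 0`, where
`B = A - b cᵀ`, the equation `A X + X Aᵀ + B Y + Y Bᵀ = 0` has no nontrivial positive
semidefinite solution. -/
lemma IsStable.add_eq_zero_of_det_pos {n : ℕ} {A : Matrix (Fin n) (Fin n) ℝ} (hA : IsStable A)
    {b c : Fin n → ℝ}
    (hdet : ∀ t : ℝ, 0 ≤ t →
      0 < (A * (A - vecMulVec b c) + t • (1 : Matrix (Fin n) (Fin n) ℝ)).det)
    {X Y : Matrix (Fin n) (Fin n) ℝ} (hX : X.PosSemidef) (hY : Y.PosSemidef)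
    (heq : A * X + X * Aᵀ + (A - vecMulVec b c) * Y + Y * (A - vecMulVec b c)ᵀ = 0) :
    X + Y = 0 := by
  have hXnn (x : Fin n → ℝ) : 0 ≤ x ⬝ᵥ X *ᵥ x := by simpa using hX.dotProduct_mulVec_nonneg x
  have hYnn (x : Fin n → ℝ) : 0 ≤ x ⬝ᵥ Y *ᵥ x := by simpa using hY.dotProduct_mulVec_nonneg x
  have hYt : Yᵀ = Y := by simpa using hY.isHermitian.eq
  obtain ⟨S, T, hSt, hTt, hSS, hST, hSTS, hTST⟩ := (hX.add hY).exists_sqrt_pinv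
  set y := Y *ᵥ c with hy
  have hcY : c ᵥ* Y = y := by rw [hy, ← vecMul_transpose, hYt]
  -- `y` lies in the range of `S`.
  have hYP : Y * (S * T) = Y := by
    have hZQ : (X + Y) * (1 - S * T) = 0 := by
      rw [← hSS, mul_sub, mul_one, sub_eq_zero, hST]
      calc S * S = S * (S * T * S) := by rw [hSTS]
        _ = S * S * (T * S) := by simp only [Matrix.mul_assoc]
    have hYQ : Y * (1 - S * T) = 0 := by
      refine ext_of_mulVec_single fun i => ?_
      rw [← mulVec_mulVec, zero_mulVec]
      set z := (1 - S * T) *ᵥ Pi.single i 1 with hz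
      have hz0 : (X + Y) *ᵥ z = 0 := by rw [hz, mulVec_mulVec, hZQ, zero_mulVec]
      have hsum : z ⬝ᵥ X *ᵥ z + z ⬝ᵥ Y *ᵥ z = 0 := by
        rw [← dotProduct_add, ← add_mulVec, hz0, dotProduct_zero]
      refine (hY.dotProduct_mulVec_zero_iff z).mp ?_
      rw [star_trivial]
      linarith [hXnn z, hYnn z]
    rw [mul_sub, mul_one, sub_eq_zero] at hYQ
    exact hYQ.symm
  have hPy : (S * T) *ᵥ y = y := by
    have h := congrArg transpose hYP
    rw [transpose_mul, transpose_mul, hYt, hSt, hTt, ← hST] at h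
    rw [hy, mulVec_mulVec, h]
  set g := T *ᵥ y with hg
  have hSg : S *ᵥ g = y := by rw [hg, mulVec_mulVec, hPy]
  -- the skew-symmetric matrix `K` with `A S - b gᵀ = S K`
  set W := A * (X + Y) - vecMulVec b y with hW
  have hWskew : Wᵀ = -W := by
    rw [eq_neg_iff_add_eq_zero, ← heq, hW]
    have hZt : (X + Y)ᵀ = X + Y := by simpa using (hX.add hY).isHermitian.eq
    rw [transpose_sub, transpose_mul, hZt, transpose_vecMulVec, transpose_sub, transpose_vecMulVec,
      sub_mul, mul_sub, vecMulVec_mul, mul_vecMulVec, hcY, ← hy]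
    noncomm_ring
  have hWP : W * (S * T) = W := by
    have h1 : (X + Y) * (S * T) = X + Y := by
      rw [← hSS, hST]
      calc S * S * (T * S) = S * (S * T * S) := by simp only [Matrix.mul_assoc]
        _ = S * S := by rw [hSTS]
    have h2 : y ᵥ* (S * T) = y := by
      rw [← mulVec_transpose, transpose_mul, hSt, hTt, ← hST, hPy]
    rw [hW, sub_mul, Matrix.mul_assoc, h1, vecMulVec_mul, h2]
  have hPW : (S * T) * W = W := by
    have h := congrArg transpose hWP
    rw [transpose_mul, transpose_mul, hSt, hTt, ← hST, hWskew, mul_neg, neg_inj] at h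
    exact h
  set K := T * W * T with hK
  have hKskew : Kᵀ = -K := by
    rw [hK, transpose_mul, transpose_mul, hTt, hWskew]
    noncomm_ring
  have hSK : A * S - vecMulVec b g = S * K := by
    calc A * S - vecMulVec b g = W * T := by
          rw [hW, sub_mul, vecMulVec_mul, ← mulVec_transpose, hTt, ← hg, Matrix.mul_assoc, ← hSS,
            Matrix.mul_assoc, hST, ← Matrix.mul_assoc S, hSTS]
      _ = S * T * W * T := by rw [hPW]
      _ = S * K := by rw [hK]; simp only [Matrix.mul_assoc]
  -- `|g|² ≤ cᵀ y`
  have hgg : g ⬝ᵥ g ≤ c ⬝ᵥ y := by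
    set x := T *ᵥ g with hx
    have hxy : x ⬝ᵥ y = g ⬝ᵥ g := by
      rw [hx, ← vecMul_transpose, hTt, ← dotProduct_mulVec, ← hg]
    have hSx : S *ᵥ x = g := by
      rw [hx, hg, mulVec_mulVec, mulVec_mulVec, hST, hTST]
    have hxZ : x ⬝ᵥ (X + Y) *ᵥ x = g ⬝ᵥ g := by
      rw [← hSS, ← mulVec_mulVec, hSx, dotProduct_mulVec, ← mulVec_transpose, hSt, hSx]
    have hcx : c ⬝ᵥ Y *ᵥ x = g ⬝ᵥ g := by
      rw [dotProduct_mulVec, hcY, dotProduct_comm, hxy]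
    have hquad := hYnn (x - c)
    rw [mulVec_sub, sub_dotProduct, dotProduct_sub, dotProduct_sub, ← hy, hxy, hcx] at hquad
    rw [add_mulVec, dotProduct_add] at hxZ
    linarith [hXnn x]
  obtain ⟨U, ω, hU, hKU⟩ := exists_unitary_of_skew hKskew
  set f : Fin n → Fin n → ℂ := fun k => S.map (algebraMap ℝ ℂ) *ᵥ U.col k with hf
  set γ : Fin n → ℂ := fun k => (fun i => (g i : ℂ)) ⬝ᵥ U.col k with hγ
  have hfk (k : Fin n) : A.map (algebraMap ℝ ℂ) *ᵥ f k - γ k • (fun i => (b i : ℂ))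
      = (Complex.I * ω k) • f k := by
    have h := congrArg (fun M : Matrix (Fin n) (Fin n) ℝ => M.map (algebraMap ℝ ℂ) *ᵥ U.col k) hSK
    have hb : (vecMulVec b g).map (algebraMap ℝ ℂ)
        = vecMulVec (fun i => (b i : ℂ)) (fun i => (g i : ℂ)) := by
      ext i j; simp [vecMulVec_apply]
    simp only [Matrix.map_sub _ (map_sub (algebraMap ℝ ℂ)), Matrix.map_mul, sub_mulVec, hb,
      ← mulVec_mulVec, hKU, mulVec_smul, vecMulVec_mulVec] at h
    rwa [op_smul_eq_smul] at h
  -- Parseval identities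
  have hparseval (a : Fin n → ℂ) :
      ∑ k, (a ⬝ᵥ U.col k) * star (γ k) = a ⬝ᵥ (fun i => (g i : ℂ)) := by
    have h1 : star (fun i => (g i : ℂ)) = fun i => (g i : ℂ) := by ext; simp
    calc ∑ k, (a ⬝ᵥ U.col k) * star (γ k)
        = (a ᵥ* U) ⬝ᵥ star ((fun i => (g i : ℂ)) ᵥ* U) := rfl
      _ = a ⬝ᵥ (U * Uᴴ) *ᵥ (fun i => (g i : ℂ)) := by
          rw [star_vecMul, h1, ← dotProduct_mulVec, mulVec_mulVec]
      _ = _ := by rw [hU, one_mulVec]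
  have hnormsum : ∑ k, Complex.normSq (γ k) = g ⬝ᵥ g := by
    have h := congrArg Complex.re (hparseval fun i => (g i : ℂ))
    rw [Complex.re_sum] at h
    have h2 (k : Fin n) : Complex.normSq (γ k) = (γ k * star (γ k)).re := by
      rw [← starRingEnd_apply, Complex.mul_conj, Complex.ofReal_re]
    simp only [h2]
    rw [h]
    simp [dotProduct]
  have hcsum : ∑ k, (((fun i => (c i : ℂ)) ⬝ᵥ f k) * star (γ k)).re = c ⬝ᵥ y := by
    have h := congrArg Complex.re (hparseval ((fun i => (c i : ℂ)) ᵥ* S.map (algebraMap ℝ ℂ)))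
    simp only [← dotProduct_mulVec, map_mulVec_ofReal, hSg, Complex.re_sum] at h
    rw [h]
    simp [dotProduct]
  have hzero (k : Fin n) (hk : γ k = 0) : f k = 0 :=
    hA.eq_zero_of_mulVec_eq (by simpa [hk] using hfk k)
  have hle (k : Fin n) :
      (((fun i => (c i : ℂ)) ⬝ᵥ f k) * star (γ k)).re ≤ Complex.normSq (γ k) := by
    rcases eq_or_ne (γ k) 0 with hk | hk
    · simp [hk]
    · exact (hA.re_frequency_response_lt hdet hk (hfk k)).le
  have hγ0 (k : Fin n) : γ k = 0 := by
    by_contra hk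
    have := Finset.sum_lt_sum (fun k _ => hle k)
      ⟨k, Finset.mem_univ k, hA.re_frequency_response_lt hdet hk (hfk k)⟩
    rw [hcsum, hnormsum] at this
    exact absurd hgg (not_le.mpr this)
  have hSU : S.map (algebraMap ℝ ℂ) * U = 0 := by
    ext i k
    exact congrFun (hzero k (hγ0 k)) i
  have hS0 : S = 0 := by
    have h : S.map (algebraMap ℝ ℂ) = 0 := by
      rw [← Matrix.mul_one (S.map (algebraMap ℝ ℂ)), ← hU, ← Matrix.mul_assoc, hSU, Matrix.zero_mul]
    ext i j
    simpa using congrFun (congrFun h i) j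
  rw [← hSS, hS0, Matrix.zero_mul]

/-- A negative eigenvalue of `A * B` yields rank-one solutions. -/
lemma exists_rank_one_solution_of_det_eq_zero {n : ℕ} {A B : Matrix (Fin n) (Fin n) ℝ} {t : ℝ}
    (ht : 0 < t) (hdet : (A * B + t • (1 : Matrix (Fin n) (Fin n) ℝ)).det = 0) :
    ∃ (v w : Fin n → ℝ), v ≠ 0 ∧ w ≠ 0 ∧
      A * vecMulVec v v + vecMulVec v v * Aᵀ + B * vecMulVec w w + vecMulVec w w * Bᵀ = 0 := by
  obtain ⟨w, hw, hABw⟩ := Matrix.exists_mulVec_eq_zero_iff.mpr hdet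
  obtain ⟨r, hr, rfl⟩ : ∃ r : ℝ, r ≠ 0 ∧ t = r ^ 2 :=
    ⟨√t, (Real.sqrt_pos.mpr ht).ne', (Real.sq_sqrt ht.le).symm⟩
  replace hABw : A *ᵥ (B *ᵥ w) = -(r ^ 2) • w := by
    rw [add_mulVec, smul_mulVec, one_mulVec, ← mulVec_mulVec] at hABw
    rw [neg_smul]
    exact eq_neg_of_add_eq_zero_left hABw
  set v := r⁻¹ • B *ᵥ w with hv
  have hBw : B *ᵥ w = r • v := by rw [hv, smul_smul, mul_inv_cancel₀ hr, one_smul]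
  have hAv : A *ᵥ v = -r • w := by
    rw [hv, mulVec_smul, hABw, smul_smul]
    congr 1
    field_simp
  refine ⟨v, w, fun h0 => ?_, hw, ?_⟩
  · rw [h0, mulVec_zero, eq_comm, smul_eq_zero] at hAv
    exact hAv.elim (neg_ne_zero.mpr hr) hw
  · simp only [mul_vecMulVec, vecMulVec_mul, vecMul_transpose, hAv, hBw]
    ext i j
    simp [vecMulVec_apply]

/-- If stable `A`, `B` with `A - B` of rank one admit nonzero positive semidefinite `X`, `Y`
with `A·X + X·Aᵀ + B·Y + Y·Bᵀ = 0`, then rank-one solutions `v·vᵀ`, `w·wᵀ` also exist. -/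
theorem rank_one_intersection {n : ℕ} (A B : Matrix (Fin n) (Fin n) ℝ)
    (hA : IsStable A) (hB : IsStable B) (hrank : (A - B).rank = 1)
    (X Y : Matrix (Fin n) (Fin n) ℝ) (hX0 : X ≠ 0) (hY0 : Y ≠ 0)
    (hX : X.PosSemidef) (hY : Y.PosSemidef)
    (heq : A * X + X * Aᵀ + B * Y + Y * Bᵀ = 0) :
    ∃ (v w : Fin n → ℝ), v ≠ 0 ∧ w ≠ 0 ∧
      A * vecMulVec v v + vecMulVec v v * Aᵀ + B * vecMulVec w w + vecMulVec w w * Bᵀ = 0 := by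
  by_cases h : ∃ t : ℝ, 0 < t ∧ (A * B + t • (1 : Matrix (Fin n) (Fin n) ℝ)).det = 0
  · obtain ⟨t, ht, hdet⟩ := h
    exact exists_rank_one_solution_of_det_eq_zero ht hdet
  · exfalso
    push Not at h
    have hpos (s : ℝ) (hs : 0 ≤ s) : 0 < (A * B + s • (1 : Matrix (Fin n) (Fin n) ℝ)).det := by
      refine det_add_smul_one_pos _ s fun t ht => ?_
      rcases (hs.trans ht).eq_or_lt with rfl | ht0
      · rw [zero_smul, add_zero, det_mul]
        exact mul_ne_zero hA.det_ne_zero hB.det_ne_zero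
      · exact h t ht0
    obtain ⟨b, c, hbc⟩ := exists_vecMulVec_of_rank_eq_one hrank
    obtain rfl : B = A - vecMulVec b c := by rw [← hbc, sub_sub_cancel]
    have hsum := hA.add_eq_zero_of_det_pos hpos hX hY heq
    refine hX0 (ext_of_mulVec_single fun i => ?_)
    rw [zero_mulVec, ← hX.dotProduct_mulVec_zero_iff]
    refine le_antisymm ?_ (hX.dotProduct_mulVec_nonneg _)
    rw [eq_neg_of_add_eq_zero_left hsum, neg_mulVec, dotProduct_neg, neg_nonpos]
    exact hY.dotProduct_mulVec_nonneg _
end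

section
/- Let Z₁, …, Z_m be real symmetric n×n matrices, μ₁, …, μ_m real numbers, and set Z = Σᵢ μᵢ·Zᵢ. Assume rank(Z) = Σᵢ rank(Zᵢ). Let v₁, …, v_m ∈ ℝⁿ with each vᵢ in the range of Zᵢ, and set v = Σᵢ μᵢ·vᵢ. Then ⟨v, Z⁺·v⟩ = Σᵢ μᵢ·⟨vᵢ, Zᵢ⁺·vᵢ⟩, where M⁺ denotes the Moore–Penrose pseudoinverse of M. -/
open Matrix

/-- `P` is the Moore–Penrose pseudoinverse of `M` (the four Penrose conditions). -/
def IsMoorePenroseInv {n : ℕ} (M P : Matrix (Fin n) (Fin n) ℝ) : Prop :=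
  M * P * M = M ∧ P * M * P = P ∧ (M * P)ᵀ = M * P ∧ (P * M)ᵀ = P * M

/-- If the rank of `∑ μᵢ Zᵢ` is the sum of the ranks of the `Zᵢ`, then vectors in the ranges of the
`Zᵢ` have a common preimage. -/
theorem exists_common_preimage_of_rank_sum_eq {K ι m n : Type*} [Field K] [Fintype ι] [Fintype n]
    (Zs : ι → Matrix m n K) [Finite m] (μ : ι → K)
    (hrank : (∑ i, μ i • Zs i).rank = ∑ i, (Zs i).rank)
    (v : ι → m → K) (hv : ∀ i, ∃ y, Zs i *ᵥ y = v i) :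
    ∃ x, ∀ i, Zs i *ᵥ x = v i := by
  let Φ := LinearMap.pi fun i => (Zs i).mulVecLin.rangeRestrict
  let S : (∀ i, LinearMap.range (Zs i).mulVecLin) →ₗ[K] m → K :=
    ∑ i, μ i • (Submodule.subtype _ ∘ₗ LinearMap.proj i)
  have hSΦ : (∑ i, μ i • Zs i).mulVecLin = S ∘ₗ Φ := by
    refine LinearMap.ext fun x => ?_
    simp [S, Φ]
  have htop : LinearMap.range Φ = ⊤ := by
    apply Submodule.eq_top_of_finrank_eq
    apply le_antisymm (Submodule.finrank_le _)
    calc Module.finrank K (∀ i, LinearMap.range (Zs i).mulVecLin)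
        = ∑ i, (Zs i).rank := Module.finrank_pi_fintype K
      _ = Module.finrank K (LinearMap.range (S ∘ₗ Φ)) := by rw [← hrank, ← hSΦ]; rfl
      _ ≤ Module.finrank K (LinearMap.range Φ) := by
        rw [LinearMap.range_comp]
        exact Submodule.finrank_map_le _ _
  obtain ⟨x, hx⟩ := LinearMap.range_eq_top.mp htop fun i => ⟨v i, hv i⟩
  exact ⟨x, fun i => congrArg Subtype.val (congrFun hx i)⟩

/-- For symmetric `M` with `M P M = M`, the quadratic form of `P` at `M x` is that of `M` at `x`. -/
theorem Matrix.IsSymm.mulVec_dotProduct_mulVec_mulVec {R n : Type*} [CommSemiring R] [Fintype n]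
    {M P : Matrix n n R} (hM : M.IsSymm) (hP : M * P * M = M) (x : n → R) :
    (M *ᵥ x) ⬝ᵥ P *ᵥ (M *ᵥ x) = x ⬝ᵥ M *ᵥ x := by
  nth_rewrite 1 [← hM.eq]
  rw [Matrix.mulVec_transpose, ← Matrix.dotProduct_mulVec, Matrix.mulVec_mulVec,
    Matrix.mulVec_mulVec, hP]

/-- **Inverse lemma.** If `Z = Σ μᵢ Zᵢ` with symmetric `Zᵢ` and `rank Z = Σ rank Zᵢ`, and
`v = Σ μᵢ vᵢ` with each `vᵢ` in the range of `Zᵢ`, then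
`⟨v, Z⁺v⟩ = Σ μᵢ ⟨vᵢ, Zᵢ⁺vᵢ⟩`. -/
theorem pseudoinverse_quadratic_form_additive {n m : ℕ}
    (Zs : Fin m → Matrix (Fin n) (Fin n) ℝ) (μ : Fin m → ℝ)
    (hsym : ∀ i, (Zs i).IsSymm)
    (Z : Matrix (Fin n) (Fin n) ℝ) (hZdef : Z = ∑ i, μ i • Zs i)
    (hrank : Z.rank = ∑ i, (Zs i).rank)
    (v : Fin m → Fin n → ℝ) (hv : ∀ i, ∃ y : Fin n → ℝ, (Zs i).mulVec y = v i)
    (w : Fin n → ℝ) (hwdef : w = ∑ i, μ i • v i)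
    (Zp : Matrix (Fin n) (Fin n) ℝ) (hZp : IsMoorePenroseInv Z Zp)
    (Zpi : Fin m → Matrix (Fin n) (Fin n) ℝ)
    (hZpi : ∀ i, IsMoorePenroseInv (Zs i) (Zpi i)) :
    w ⬝ᵥ Zp.mulVec w = ∑ i, μ i * (v i ⬝ᵥ (Zpi i).mulVec (v i)) := by
  subst hZdef
  obtain ⟨x, hx⟩ := exists_common_preimage_of_rank_sum_eq Zs μ hrank v hv
  have hZsymm : (∑ i, μ i • Zs i).IsSymm := by
    simp [Matrix.IsSymm, Matrix.transpose_sum, (hsym _).eq]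
  have hw : w = (∑ i, μ i • Zs i) *ᵥ x := by
    simp [hwdef, Matrix.sum_mulVec, Matrix.smul_mulVec, hx]
  rw [hw, hZsymm.mulVec_dotProduct_mulVec_mulVec hZp.1, Matrix.sum_mulVec, dotProduct_sum]
  refine Finset.sum_congr rfl fun i _ => ?_
  rw [← hx i, (hsym i).mulVec_dotProduct_mulVec_mulVec (hZpi i).1, Matrix.smul_mulVec,
    dotProduct_smul, smul_eq_mul]
end
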